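/- arXiv:math/0309415 — 2 statements merged into one kernel-verified Lean document; each statement's English description precedes it below -/
import Mathlib

section
/- Let Ω ⊆ ℂ² be open with coordinates (x,y), let u₁,u₂ : Ω → ℂ be holomorphic with J(u₁,u₂) ≠ 0 on Ω, and let γ ∈ GL(3,ℂ) with rows (a₁,a₂,a₃),(b₁,b₂,b₃),(c₁,c₂,c₃) be such that c₁u₁+c₂u₂+c₃ ≠ 0 on Ω. Define (v₁,v₂) := γ(u₁,u₂) = ((a₁u₁+a₂u₂+a₃)/(c₁u₁+c₂u₂+c₃), (b₁u₁+b₂u₂+b₃)/(c₁u₁+c₂u₂+c₃)). Then J(v₁,v₂) = det(γ)·(c₁u₁+c₂u₂+c₃)⁻³·J(u₁,u₂) ≠ 0, and at every point of Ω: {v₁,v₂;x,y}ₓ = {u₁,u₂;x,y}ₓ, {v₁,v₂;x,y}ᵧ = {u₁,u₂;x,y}ᵧ, [v₁,v₂;x,y]ₓ = [u₁,u₂;x,y]ₓ, and [v₁,v₂;x,y]ᵧ = [u₁,u₂;x,y]ᵧ. -/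
open Complex Matrix

noncomputable section

/-- Partial derivative in the first complex variable. -/
def pdx (f : ℂ × ℂ → ℂ) (p : ℂ × ℂ) : ℂ := deriv (fun x => f (x, p.2)) p.1

/-- Partial derivative in the second complex variable. -/
def pdy (f : ℂ × ℂ → ℂ) (p : ℂ × ℂ) : ℂ := deriv (fun y => f (p.1, y)) p.2

/-- The Jacobian `J(u₁,u₂) = ∂ₓu₁·∂ᵧu₂ − ∂ₓu₂·∂ᵧu₁`. -/
def Jac (u₁ u₂ : ℂ × ℂ → ℂ) (p : ℂ × ℂ) : ℂ :=
  pdx u₁ p * pdy u₂ p - pdx u₂ p * pdy u₁ p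

/-- The GL(3) derivative `{u₁,u₂;x,y}ₓ`. -/
def brX (u₁ u₂ : ℂ × ℂ → ℂ) (p : ℂ × ℂ) : ℂ :=
  (pdx u₁ p * pdx (pdx u₂) p - pdx u₂ p * pdx (pdx u₁) p) / Jac u₁ u₂ p

/-- The GL(3) derivative `{u₁,u₂;x,y}ᵧ`. -/
def brY (u₁ u₂ : ℂ × ℂ → ℂ) (p : ℂ × ℂ) : ℂ :=
  -(pdy u₁ p * pdy (pdy u₂) p - pdy u₂ p * pdy (pdy u₁) p) / Jac u₁ u₂ p

/-- The GL(3) derivative `[u₁,u₂;x,y]ₓ`. -/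
def sqX (u₁ u₂ : ℂ × ℂ → ℂ) (p : ℂ × ℂ) : ℂ :=
  ((pdy u₁ p * pdx (pdx u₂) p - pdy u₂ p * pdx (pdx u₁) p)
      + 2 * (pdx u₁ p * pdx (pdy u₂) p - pdx u₂ p * pdx (pdy u₁) p)) / Jac u₁ u₂ p

/-- The GL(3) derivative `[u₁,u₂;x,y]ᵧ`. -/
def sqY (u₁ u₂ : ℂ × ℂ → ℂ) (p : ℂ × ℂ) : ℂ :=
  -((pdx u₁ p * pdy (pdy u₂) p - pdx u₂ p * pdy (pdy u₁) p)
      + 2 * (pdy u₁ p * pdx (pdy u₂) p - pdy u₂ p * pdx (pdy u₁) p)) / Jac u₁ u₂ p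

open Metric Filter Topology in
/-- Difference quotients of a bounded holomorphic function converge at a rate that depends only on
the bound. -/
lemma dist_dslope_deriv_le {f : ℂ → ℂ} {c z : ℂ} {r M : ℝ}
    (hf : DifferentiableOn ℂ f (ball c r)) (hM : ∀ w ∈ ball c r, ‖f w‖ ≤ M)
    (hz : z ∈ ball c r) :
    dist (dslope f c z) (deriv f c) ≤ 2 * (2 * M / r) / r * dist z c := by
  have hc : c ∈ ball c r := mem_ball_self (pos_of_mem_ball hz)
  have key : ∀ {g : ℂ → ℂ} {K : ℝ}, (∀ w ∈ ball c r, ‖g w‖ ≤ K) →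
      Set.MapsTo g (ball c r) (closedBall (g c) (2 * K)) := fun {g K} hK w hw => by
    rw [mem_closedBall, dist_eq_norm]
    linarith [norm_sub_le (g w) (g c), hK w hw, hK c hc]
  have hg := (differentiableOn_dslope (isOpen_ball.mem_nhds hc)).2 hf
  simpa only [dslope_same] using dist_le_div_mul_dist_of_mapsTo_ball hg
    (key fun w hw => norm_dslope_le_div_of_mapsTo_ball hf (key hM) hw) hz

lemma hasDerivAt_slice_fst {u : ℂ × ℂ → ℂ} {p : ℂ × ℂ} (hu : DifferentiableAt ℂ u p) :
    HasDerivAt (fun x => u (x, p.2)) (pdx u p) p.1 := by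
  have h : DifferentiableAt ℂ (fun x => u (x, p.2)) p.1 :=
    DifferentiableAt.comp (g := u) p.1 hu (by fun_prop)
  exact h.hasDerivAt

lemma hasDerivAt_slice_snd {u : ℂ × ℂ → ℂ} {p : ℂ × ℂ} (hu : DifferentiableAt ℂ u p) :
    HasDerivAt (fun y => u (p.1, y)) (pdy u p) p.2 := by
  have h : DifferentiableAt ℂ (fun y => u (p.1, y)) p.2 :=
    DifferentiableAt.comp (g := u) p.2 hu (by fun_prop)
  exact h.hasDerivAt

lemma eventually_slice_fst {P : ℂ × ℂ → Prop} {p : ℂ × ℂ} (h : ∀ᶠ q in nhds p, P q) :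
    ∀ᶠ x in nhds p.1, P (x, p.2) :=
  (show ContinuousAt (fun x : ℂ => (x, p.2)) p.1 by fun_prop).eventually h

lemma eventually_slice_snd {P : ℂ × ℂ → Prop} {p : ℂ × ℂ} (h : ∀ᶠ q in nhds p, P q) :
    ∀ᶠ y in nhds p.2, P (p.1, y) :=
  (show ContinuousAt (fun y : ℂ => (p.1, y)) p.2 by fun_prop).eventually h

lemma hasDerivAt_pdx_fst {u : ℂ × ℂ → ℂ} {p : ℂ × ℂ}
    (hu : ∀ᶠ q in nhds p, DifferentiableAt ℂ u q) :
    HasDerivAt (fun x => pdx u (x, p.2)) (pdx (pdx u) p) p.1 := by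
  have h : AnalyticAt ℂ (fun x => u (x, p.2)) p.1 :=
    Complex.analyticAt_iff_eventually_differentiableAt.2
      ((eventually_slice_fst hu).mono fun x hx => (hasDerivAt_slice_fst hx).differentiableAt)
  exact h.deriv.differentiableAt.hasDerivAt

lemma hasDerivAt_pdy_snd {u : ℂ × ℂ → ℂ} {p : ℂ × ℂ}
    (hu : ∀ᶠ q in nhds p, DifferentiableAt ℂ u q) :
    HasDerivAt (fun y => pdy u (p.1, y)) (pdy (pdy u) p) p.2 := by
  have h : AnalyticAt ℂ (fun y => u (p.1, y)) p.2 :=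
    Complex.analyticAt_iff_eventually_differentiableAt.2
      ((eventually_slice_snd hu).mono fun y hy => (hasDerivAt_slice_snd hy).differentiableAt)
  exact h.deriv.differentiableAt.hasDerivAt

open Metric Filter Topology in
/-- The partial derivative `∂ᵧu` of a holomorphic function is holomorphic in `x`, being a uniform
limit of difference quotients. -/
lemma hasDerivAt_pdy_fst {u : ℂ × ℂ → ℂ} {p : ℂ × ℂ}
    (hu : ∀ᶠ q in 𝓝 p, DifferentiableAt ℂ u q) :
    HasDerivAt (fun x => pdy u (x, p.2)) (pdx (pdy u) p) p.1 := by
  have hb : ∀ᶠ q in 𝓝 p, ‖u q‖ < ‖u p‖ + 1 :=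
    hu.self_of_nhds.continuousAt.norm.eventually_lt_const (by linarith)
  obtain ⟨r, hr, hball⟩ := Metric.eventually_nhds_iff_ball.1 (hu.and hb)
  have hmem : ∀ {x y : ℂ}, x ∈ ball p.1 r → y ∈ ball p.2 r → (x, y) ∈ ball p r :=
    fun hx hy => by rw [← ball_prod_same]; exact ⟨hx, hy⟩
  have hunif : TendstoUniformlyOn (fun t x => dslope (fun y => u (x, y)) p.2 t)
      (fun x => pdy u (x, p.2)) (𝓝[≠] p.2) (ball p.1 r) := by
    rw [Metric.tendstoUniformlyOn_iff]
    intro ε hε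
    set C : ℝ := 2 * (2 * (‖u p‖ + 1) / r) / r
    have hlim : Tendsto (fun t => C * dist t p.2) (𝓝 p.2) (𝓝 0) := by
      have : Continuous fun t => C * dist t p.2 := by fun_prop
      simpa using this.tendsto p.2
    filter_upwards [nhdsWithin_le_nhds (hlim.eventually_lt_const hε),
      nhdsWithin_le_nhds (ball_mem_nhds p.2 hr)] with t ht htr x hx
    rw [dist_comm]
    refine lt_of_le_of_lt (dist_dslope_deriv_le (f := fun y => u (x, y)) ?_ ?_ htr) ht
    · exact fun y hy => (hasDerivAt_slice_snd (p := (x, y))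
        (hball _ (hmem hx hy)).1).differentiableAt.differentiableWithinAt
    · exact fun y hy => (hball _ (hmem hx hy)).2.le
  have hdiff : ∀ᶠ t in 𝓝[≠] p.2,
      DifferentiableOn ℂ (fun x => dslope (fun y => u (x, y)) p.2 t) (ball p.1 r) := by
    filter_upwards [self_mem_nhdsWithin, nhdsWithin_le_nhds (ball_mem_nhds p.2 hr)]
      with t hne htr
    have hslice : ∀ {y : ℂ}, y ∈ ball p.2 r →
        DifferentiableOn ℂ (fun x => u (x, y)) (ball p.1 r) := fun {y} hy x hx =>
      (hasDerivAt_slice_fst (p := (x, y))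
        (hball _ (hmem hx hy)).1).differentiableAt.differentiableWithinAt
    simp only [dslope_of_ne _ hne, slope_def_field]
    exact ((hslice htr).sub (hslice (mem_ball_self hr))).div_const _
  exact ((hunif.tendstoLocallyUniformlyOn.differentiableOn hdiff isOpen_ball).differentiableAt
    (ball_mem_nhds p.1 hr)).hasDerivAt

lemma hasDerivAt_linearFractional {f g : ℂ → ℂ} {f' g' t : ℂ} (a₁ a₂ a₃ c₁ c₂ c₃ : ℂ)
    (hf : HasDerivAt f f' t) (hg : HasDerivAt g g' t) (hD : c₁ * f t + c₂ * g t + c₃ ≠ 0) :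
    HasDerivAt (fun s => (a₁ * f s + a₂ * g s + a₃) / (c₁ * f s + c₂ * g s + c₃))
      ((a₁ * (c₁ * f t + c₂ * g t + c₃) - c₁ * (a₁ * f t + a₂ * g t + a₃))
          / (c₁ * f t + c₂ * g t + c₃) ^ 2 * f'
        + (a₂ * (c₁ * f t + c₂ * g t + c₃) - c₂ * (a₁ * f t + a₂ * g t + a₃))
          / (c₁ * f t + c₂ * g t + c₃) ^ 2 * g') t := by
  refine ((((hf.const_mul a₁).add (hg.const_mul a₂)).add_const a₃).div
    (((hf.const_mul c₁).add (hg.const_mul c₂)).add_const c₃) hD).congr_deriv ?_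
  simp only [Pi.add_apply]
  field_simp
  ring

/-- The coefficient of `df` (for `(a, c) = (a₁, c₁)`) or `dg` (for `(a, c) = (a₂, c₂)`) in the
differential of a linear fractional function with numerator `N` and denominator `D`. -/
def lfCoeff (a c N D : ℂ) : ℂ := (a * D - c * N) / D ^ 2

lemma hasDerivAt_lfCoeff_combination {f g A B : ℂ → ℂ} {f' g' A' B' t : ℂ}
    (a₁ a₂ a₃ c₁ c₂ c₃ : ℂ)
    (hf : HasDerivAt f f' t) (hg : HasDerivAt g g' t)
    (hA : HasDerivAt A A' t) (hB : HasDerivAt B B' t)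
    (hD : c₁ * f t + c₂ * g t + c₃ ≠ 0) :
    HasDerivAt
      (fun s =>
        lfCoeff a₁ c₁ (a₁ * f s + a₂ * g s + a₃) (c₁ * f s + c₂ * g s + c₃) * A s
          + lfCoeff a₂ c₂ (a₁ * f s + a₂ * g s + a₃) (c₁ * f s + c₂ * g s + c₃) * B s)
      (lfCoeff a₁ c₁ (a₁ * f t + a₂ * g t + a₃) (c₁ * f t + c₂ * g t + c₃)
          * (A' - (c₁ * f' + c₂ * g') / (c₁ * f t + c₂ * g t + c₃) * A t
            - (c₁ * A t + c₂ * B t) / (c₁ * f t + c₂ * g t + c₃) * f')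
        + lfCoeff a₂ c₂ (a₁ * f t + a₂ * g t + a₃) (c₁ * f t + c₂ * g t + c₃)
          * (B' - (c₁ * f' + c₂ * g') / (c₁ * f t + c₂ * g t + c₃) * B t
            - (c₁ * A t + c₂ * B t) / (c₁ * f t + c₂ * g t + c₃) * g')) t := by
  have hN := ((hf.const_mul a₁).add (hg.const_mul a₂)).add_const a₃
  have hDen := ((hf.const_mul c₁).add (hg.const_mul c₂)).add_const c₃
  have h₁ := (((hDen.const_mul a₁).sub (hN.const_mul c₁)).div (hDen.pow 2) (pow_ne_zero 2 hD)).mul hA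
  have h₂ := (((hDen.const_mul a₂).sub (hN.const_mul c₂)).div (hDen.pow 2) (pow_ne_zero 2 hD)).mul hB
  refine (h₁.add h₂).congr_deriv ?_
  simp only [Pi.add_apply, Pi.sub_apply, Pi.pow_apply, Pi.div_apply, lfCoeff]
  generalize hd : c₁ * f t + c₂ * g t + c₃ = d at *
  field_simp
  ring

/-- First and second partial derivatives of a linear fractional function of `u₁` and `u₂`. -/
lemma pd_linearFractional {u₁ u₂ : ℂ × ℂ → ℂ} {p : ℂ × ℂ} (a₁ a₂ a₃ c₁ c₂ c₃ : ℂ)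
    (hu₁ : ∀ᶠ q in nhds p, DifferentiableAt ℂ u₁ q)
    (hu₂ : ∀ᶠ q in nhds p, DifferentiableAt ℂ u₂ q)
    (hD : c₁ * u₁ p + c₂ * u₂ p + c₃ ≠ 0) {v : ℂ × ℂ → ℂ} {D m₁ m₂ : ℂ}
    (hv : v = fun p => (a₁ * u₁ p + a₂ * u₂ p + a₃) / (c₁ * u₁ p + c₂ * u₂ p + c₃))
    (hDp : D = c₁ * u₁ p + c₂ * u₂ p + c₃)
    (hm₁ : m₁ = lfCoeff a₁ c₁ (a₁ * u₁ p + a₂ * u₂ p + a₃) D)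
    (hm₂ : m₂ = lfCoeff a₂ c₂ (a₁ * u₁ p + a₂ * u₂ p + a₃) D) :
    pdx v p = m₁ * pdx u₁ p + m₂ * pdx u₂ p ∧
    pdy v p = m₁ * pdy u₁ p + m₂ * pdy u₂ p ∧
    pdx (pdx v) p =
      m₁ * (pdx (pdx u₁) p - (c₁ * pdx u₁ p + c₂ * pdx u₂ p) / D * pdx u₁ p
        - (c₁ * pdx u₁ p + c₂ * pdx u₂ p) / D * pdx u₁ p)
      + m₂ * (pdx (pdx u₂) p - (c₁ * pdx u₁ p + c₂ * pdx u₂ p) / D * pdx u₂ p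
        - (c₁ * pdx u₁ p + c₂ * pdx u₂ p) / D * pdx u₂ p) ∧
    pdx (pdy v) p =
      m₁ * (pdx (pdy u₁) p - (c₁ * pdx u₁ p + c₂ * pdx u₂ p) / D * pdy u₁ p
        - (c₁ * pdy u₁ p + c₂ * pdy u₂ p) / D * pdx u₁ p)
      + m₂ * (pdx (pdy u₂) p - (c₁ * pdx u₁ p + c₂ * pdx u₂ p) / D * pdy u₂ p
        - (c₁ * pdy u₁ p + c₂ * pdy u₂ p) / D * pdx u₂ p) ∧
    pdy (pdy v) p =
      m₁ * (pdy (pdy u₁) p - (c₁ * pdy u₁ p + c₂ * pdy u₂ p) / D * pdy u₁ p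
        - (c₁ * pdy u₁ p + c₂ * pdy u₂ p) / D * pdy u₁ p)
      + m₂ * (pdy (pdy u₂) p - (c₁ * pdy u₁ p + c₂ * pdy u₂ p) / D * pdy u₂ p
        - (c₁ * pdy u₁ p + c₂ * pdy u₂ p) / D * pdy u₂ p) := by
  subst hDp hm₁ hm₂ hv
  have hden : ∀ᶠ q in nhds p, c₁ * u₁ q + c₂ * u₂ q + c₃ ≠ 0 := by
    have h₁ := hu₁.self_of_nhds.continuousAt
    have h₂ := hu₂.self_of_nhds.continuousAt
    exact (show ContinuousAt (fun q => c₁ * u₁ q + c₂ * u₂ q + c₃) p by fun_prop).eventually_ne hD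
  have hx := (hu₁.and (hu₂.and hden)).mono fun q hq =>
    (hasDerivAt_linearFractional a₁ a₂ a₃ c₁ c₂ c₃ (hasDerivAt_slice_fst hq.1)
      (hasDerivAt_slice_fst hq.2.1) hq.2.2).deriv
  have hy := (hu₁.and (hu₂.and hden)).mono fun q hq =>
    (hasDerivAt_linearFractional a₁ a₂ a₃ c₁ c₂ c₃ (hasDerivAt_slice_snd hq.1)
      (hasDerivAt_slice_snd hq.2.1) hq.2.2).deriv
  have hfst₁ := hasDerivAt_slice_fst hu₁.self_of_nhds
  have hfst₂ := hasDerivAt_slice_fst hu₂.self_of_nhds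
  have hsnd₁ := hasDerivAt_slice_snd hu₁.self_of_nhds
  have hsnd₂ := hasDerivAt_slice_snd hu₂.self_of_nhds
  refine ⟨hx.self_of_nhds, hy.self_of_nhds, ?_, ?_, ?_⟩
  · exact ((hasDerivAt_lfCoeff_combination a₁ a₂ a₃ c₁ c₂ c₃ hfst₁ hfst₂ (hasDerivAt_pdx_fst hu₁)
      (hasDerivAt_pdx_fst hu₂) hD).congr_of_eventuallyEq (eventually_slice_fst hx)).deriv
  · exact ((hasDerivAt_lfCoeff_combination a₁ a₂ a₃ c₁ c₂ c₃ hfst₁ hfst₂ (hasDerivAt_pdy_fst hu₁)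
      (hasDerivAt_pdy_fst hu₂) hD).congr_of_eventuallyEq (eventually_slice_fst hy)).deriv
  · exact ((hasDerivAt_lfCoeff_combination a₁ a₂ a₃ c₁ c₂ c₃ hsnd₁ hsnd₂ (hasDerivAt_pdy_snd hu₁)
      (hasDerivAt_pdy_snd hu₂) hD).congr_of_eventuallyEq (eventually_slice_snd hy)).deriv

/-- Invariance of the four GL(3) derivatives under a linear fractional
transformation of the first arguments, together with the transformation law for the
Jacobian. -/
theorem statement0 (Ω : Set (ℂ × ℂ)) (hΩ : IsOpen Ω)
    (u₁ u₂ : ℂ × ℂ → ℂ)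
    (hu₁ : DifferentiableOn ℂ u₁ Ω) (hu₂ : DifferentiableOn ℂ u₂ Ω)
    (hJ : ∀ p ∈ Ω, Jac u₁ u₂ p ≠ 0)
    (a₁ a₂ a₃ b₁ b₂ b₃ c₁ c₂ c₃ : ℂ)
    (hdet : a₁ * (b₂ * c₃ - b₃ * c₂) - a₂ * (b₁ * c₃ - b₃ * c₁)
        + a₃ * (b₁ * c₂ - b₂ * c₁) ≠ 0)
    (hden : ∀ p ∈ Ω, c₁ * u₁ p + c₂ * u₂ p + c₃ ≠ 0)
    (v₁ v₂ : ℂ × ℂ → ℂ)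
    (hv₁ : v₁ = fun p => (a₁ * u₁ p + a₂ * u₂ p + a₃) / (c₁ * u₁ p + c₂ * u₂ p + c₃))
    (hv₂ : v₂ = fun p => (b₁ * u₁ p + b₂ * u₂ p + b₃) / (c₁ * u₁ p + c₂ * u₂ p + c₃)) :
    ∀ p ∈ Ω,
      Jac v₁ v₂ p =
        (a₁ * (b₂ * c₃ - b₃ * c₂) - a₂ * (b₁ * c₃ - b₃ * c₁)
          + a₃ * (b₁ * c₂ - b₂ * c₁)) * ((c₁ * u₁ p + c₂ * u₂ p + c₃)⁻¹) ^ 3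
          * Jac u₁ u₂ p ∧
      Jac v₁ v₂ p ≠ 0 ∧
      brX v₁ v₂ p = brX u₁ u₂ p ∧
      brY v₁ v₂ p = brY u₁ u₂ p ∧
      sqX v₁ v₂ p = sqX u₁ u₂ p ∧
      sqY v₁ v₂ p = sqY u₁ u₂ p := by
  intro p hp
  have hΩp := hΩ.mem_nhds hp
  have hd₁ := hu₁.eventually_differentiableAt hΩp
  have hd₂ := hu₂.eventually_differentiableAt hΩp
  have hD := hden p hp
  have hJp := hJ p hp
  obtain ⟨D, hDp⟩ : ∃ D, D = c₁ * u₁ p + c₂ * u₂ p + c₃ := ⟨_, rfl⟩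
  obtain ⟨m₁, hm₁⟩ : ∃ m, m = lfCoeff a₁ c₁ (a₁ * u₁ p + a₂ * u₂ p + a₃) D := ⟨_, rfl⟩
  obtain ⟨m₂, hm₂⟩ : ∃ m, m = lfCoeff a₂ c₂ (a₁ * u₁ p + a₂ * u₂ p + a₃) D := ⟨_, rfl⟩
  obtain ⟨n₁, hn₁⟩ : ∃ n, n = lfCoeff b₁ c₁ (b₁ * u₁ p + b₂ * u₂ p + b₃) D := ⟨_, rfl⟩
  obtain ⟨n₂, hn₂⟩ : ∃ n, n = lfCoeff b₂ c₂ (b₁ * u₁ p + b₂ * u₂ p + b₃) D := ⟨_, rfl⟩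
  obtain ⟨hx₁, hy₁, hxx₁, hxy₁, hyy₁⟩ :=
    pd_linearFractional a₁ a₂ a₃ c₁ c₂ c₃ hd₁ hd₂ hD hv₁ hDp hm₁ hm₂
  obtain ⟨hx₂, hy₂, hxx₂, hxy₂, hyy₂⟩ :=
    pd_linearFractional b₁ b₂ b₃ c₁ c₂ c₃ hd₁ hd₂ hD hv₂ hDp hn₁ hn₂
  have hdetm : m₁ * n₂ - m₂ * n₁ =
      (a₁ * (b₂ * c₃ - b₃ * c₂) - a₂ * (b₁ * c₃ - b₃ * c₁)
        + a₃ * (b₁ * c₂ - b₂ * c₁)) * D⁻¹ ^ 3 := by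
    rw [hm₁, hm₂, hn₁, hn₂]
    simp only [lfCoeff]
    rw [← hDp] at hD
    field_simp
    rw [hDp]
    ring
  rw [← hDp] at hD
  have hJv : Jac v₁ v₂ p = (m₁ * n₂ - m₂ * n₁) * Jac u₁ u₂ p := by
    simp only [Jac, hx₁, hx₂, hy₁, hy₂]
    ring
  have hm : m₁ * n₂ - m₂ * n₁ ≠ 0 := by
    rw [hdetm]
    exact mul_ne_zero hdet (pow_ne_zero 3 (inv_ne_zero hD))
  refine ⟨by rw [hJv, hdetm, hDp], by rw [hJv]; exact mul_ne_zero hm hJp, ?_, ?_, ?_, ?_⟩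
  · rw [brX, brX, hJv, ← mul_div_mul_left _ (Jac u₁ u₂ p) hm, hx₁, hx₂, hxx₁, hxx₂]
    ring
  · rw [brY, brY, hJv, ← mul_div_mul_left _ (Jac u₁ u₂ p) hm, hy₁, hy₂, hyy₁, hyy₂]
    ring
  · rw [sqX, sqX, hJv, ← mul_div_mul_left _ (Jac u₁ u₂ p) hm, hx₁, hx₂, hy₁, hy₂, hxx₁, hxx₂,
      hxy₁, hxy₂]
    ring
  · rw [sqY, sqY, hJv, ← mul_div_mul_left _ (Jac u₁ u₂ p) hm, hx₁, hx₂, hy₁, hy₂, hyy₁, hyy₂,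
      hxy₁, hxy₂]
    ring
end
end

section
/- (Change of independent variables / Main Proposition 1.) Let Φ = (w₁,w₂) : Ω → Ω' be a holomorphic map between open subsets of ℂ² with Jacobian determinant D := ∂ₓw₁·∂ᵧw₂ − ∂ₓw₂·∂ᵧw₁ ≠ 0 on Ω, and such that J(w₁,w₂) computed in the variables (x,y) is nonzero; let u₁,u₂ : Ω' → ℂ be holomorphic with J(u₁,u₂) (computed in the variables (w₁,w₂)) nonzero on Ω'. Let ũᵢ := uᵢ ∘ Φ. Then at every point of Ω the column vector ({ũ₁,ũ₂;x,y}ₓ, {ũ₁,ũ₂;x,y}ᵧ, [ũ₁,ũ₂;x,y]ₓ, [ũ₁,ũ₂;x,y]ᵧ)ᵀ equals (1/D)·M(w₁,w₂;x,y) applied to the column vector ({u₁,u₂;w₁,w₂}_{w₁}, {u₁,u₂;w₁,w₂}_{w₂}, [u₁,u₂;w₁,w₂]_{w₁}, [u₁,u₂;w₁,w₂]_{w₂})ᵀ evaluated at Φ(x,y), plus the column vector ({w₁,w₂;x,y}ₓ, {w₁,w₂;x,y}ᵧ, [w₁,w₂;x,y]ₓ, [w₁,w₂;x,y]ᵧ)ᵀ.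 -/
open Complex Matrix

noncomputable section

/-- The 4×4 matrix `M(w₁,w₂;x,y)` built from the first partial derivatives of
the holomorphic map `(w₁,w₂)`. -/
def Mmat (w₁ w₂ : ℂ × ℂ → ℂ) (p : ℂ × ℂ) : Matrix (Fin 4) (Fin 4) ℂ :=
  !![(pdx w₁ p) ^ 3, -(pdx w₂ p) ^ 3, (pdx w₁ p) ^ 2 * pdx w₂ p,
        -(pdx w₁ p) * (pdx w₂ p) ^ 2;
     -(pdy w₁ p) ^ 3, (pdy w₂ p) ^ 3, -(pdy w₁ p) ^ 2 * pdy w₂ p,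
        (pdy w₁ p) * (pdy w₂ p) ^ 2;
     3 * (pdx w₁ p) ^ 2 * pdy w₁ p, -3 * (pdx w₂ p) ^ 2 * pdy w₂ p,
        (pdx w₁ p) ^ 2 * pdy w₂ p + 2 * pdx w₁ p * pdx w₂ p * pdy w₁ p,
        -(pdx w₂ p) ^ 2 * pdy w₁ p - 2 * pdx w₁ p * pdx w₂ p * pdy w₂ p;
     -3 * pdx w₁ p * (pdy w₁ p) ^ 2, 3 * pdx w₂ p * (pdy w₂ p) ^ 2,
        -(pdx w₂ p) * (pdy w₁ p) ^ 2 - 2 * pdx w₁ p * pdy w₁ p * pdy w₂ p,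
        (pdx w₁ p) * (pdy w₂ p) ^ 2 + 2 * pdx w₂ p * pdy w₁ p * pdy w₂ p]

/-- The column vector of the four GL(3) derivatives of the pair `(u₁,u₂)`. -/
def Vvec (u₁ u₂ : ℂ × ℂ → ℂ) (p : ℂ × ℂ) : Fin 4 → ℂ :=
  ![brX u₁ u₂ p, brY u₁ u₂ p, sqX u₁ u₂ p, sqY u₁ u₂ p]

section Holomorphic

open Metric Set Filter Topology MeasureTheory

variable {E F : Type*} [NormedAddCommGroup E] [NormedSpace ℂ E]
  [NormedAddCommGroup F] [NormedSpace ℂ F]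

lemma hasDerivAt_comp_add_smul {f : E → F} {p v : E} {z : ℂ}
    (hf : DifferentiableAt ℂ f (p + z • v)) :
    HasDerivAt (fun z : ℂ => f (p + z • v)) (fderiv ℂ f (p + z • v) v) z := by
  have h : HasDerivAt (fun z : ℂ => p + z • v) v z := by
    simpa using ((hasDerivAt_id z).smul_const v).const_add p
  exact hf.hasFDerivAt.comp_hasDerivAt z h

lemma add_smul_mem_closedBall {p p₀ v : E} {z : ℂ} {R r : ℝ} (hp : p ∈ closedBall p₀ R)
    (hz : ‖z‖ * ‖v‖ ≤ r) : p + z • v ∈ closedBall p₀ (R + r) := by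
  rw [mem_closedBall_iff_norm] at hp ⊢
  calc ‖p + z • v - p₀‖ = ‖(p - p₀) + z • v‖ := by congr 1; abel
    _ ≤ ‖p - p₀‖ + ‖z • v‖ := norm_add_le _ _
    _ ≤ R + r := by rw [norm_smul]; gcongr

/-- The Fréchet derivative of a holomorphic function is continuous. -/
theorem DifferentiableOn.continuousOn_fderiv_of_isOpen [ProperSpace E] {f : E → F} {U : Set E}
    (hf : DifferentiableOn ℂ f U) (hU : IsOpen U) : ContinuousOn (fderiv ℂ f) U := by
  intro p₀ hp₀
  refine ContinuousAt.continuousWithinAt ?_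
  obtain ⟨R', hR', hball⟩ := nhds_basis_closedBall.mem_iff.1 (hU.mem_nhds hp₀)
  obtain ⟨R, hR, rfl⟩ : ∃ R : ℝ, 0 < R ∧ R + R = R' := ⟨R' / 2, by positivity, by ring⟩
  have hdiff : ∀ q ∈ closedBall p₀ (R + R), DifferentiableAt ℂ f q := fun q hq =>
    hf.differentiableAt (hU.mem_nhds (hball hq))
  have hunif : UniformContinuousOn f (closedBall p₀ (R + R)) :=
    (isCompact_closedBall _ _).uniformContinuousOn_of_continuous (hf.continuousOn.mono hball)
  rw [Metric.continuousAt_iff']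
  intro ε hε
  obtain ⟨δ, hδ, hfδ⟩ := Metric.uniformContinuousOn_iff.1 hunif (ε / 2 * R) (by positivity)
  filter_upwards [ball_mem_nhds p₀ (lt_min hδ hR)] with p hp
  rw [mem_ball, lt_min_iff] at hp
  have hpR : p ∈ closedBall p₀ R := mem_closedBall.2 hp.2.le
  have hp₀R : p₀ ∈ closedBall p₀ R := mem_closedBall_self hR.le
  rw [dist_eq_norm]
  refine lt_of_le_of_lt (ContinuousLinearMap.opNorm_le_bound _ (half_pos hε).le fun v => ?_)
    (half_lt_self hε)
  rcases eq_or_ne v 0 with rfl | hv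
  · simp
  have hv' : 0 < ‖v‖ := norm_pos_iff.2 hv
  have hz : ∀ z ∈ closedBall (0 : ℂ) (R / ‖v‖), ‖z‖ * ‖v‖ ≤ R := fun z hz =>
    (le_div_iff₀ hv').1 (mem_closedBall_zero_iff.1 hz)
  have hder : ∀ z ∈ closedBall (0 : ℂ) (R / ‖v‖),
      HasDerivAt (fun z : ℂ => f (p + z • v) - f (p₀ + z • v))
        (fderiv ℂ f (p + z • v) v - fderiv ℂ f (p₀ + z • v) v) z := fun z hzb =>
    (hasDerivAt_comp_add_smul (hdiff _ (add_smul_mem_closedBall hpR (hz z hzb)))).sub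
      (hasDerivAt_comp_add_smul (hdiff _ (add_smul_mem_closedBall hp₀R (hz z hzb))))
  have hdc : DiffContOnCl ℂ (fun z : ℂ => f (p + z • v) - f (p₀ + z • v))
      (ball 0 (R / ‖v‖)) :=
    DifferentiableOn.diffContOnCl fun z hzb =>
      (hder z (closure_ball_subset_closedBall hzb)).differentiableAt.differentiableWithinAt
  have hle := Complex.norm_deriv_le_of_forall_mem_sphere_norm_le (C := ε / 2 * R) (by positivity) hdc
    fun z hzs => by
      have hzb := sphere_subset_closedBall hzs
      rw [← dist_eq_norm]
      refine (hfδ _ (add_smul_mem_closedBall hpR (hz z hzb)) _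
        (add_smul_mem_closedBall hp₀R (hz z hzb)) ?_).le
      simpa using hp.1
  rw [(hder 0 (mem_closedBall_self (by positivity))).deriv] at hle
  simp only [zero_smul, add_zero] at hle
  rw [_root_.sub_apply]
  refine hle.trans_eq ?_
  field_simp

variable [CompleteSpace F]

/-- The directional derivatives of a holomorphic function are holomorphic. -/
theorem DifferentiableOn.fderiv_apply_of_isOpen [ProperSpace E] {f : E → F} {U : Set E}
    (hf : DifferentiableOn ℂ f U) (hU : IsOpen U) (v : E) :
    DifferentiableOn ℂ (fun p => fderiv ℂ f p v) U := by
  intro p₀ hp₀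
  refine DifferentiableAt.differentiableWithinAt ?_
  obtain ⟨R', hR', hball⟩ := nhds_basis_closedBall.mem_iff.1 (hU.mem_nhds hp₀)
  obtain ⟨R, hR, rfl⟩ : ∃ R : ℝ, 0 < R ∧ R + R = R' := ⟨R' / 2, by positivity, by ring⟩
  have hdiff : ∀ q ∈ closedBall p₀ (R + R), DifferentiableAt ℂ f q := fun q hq =>
    hf.differentiableAt (hU.mem_nhds (hball hq))
  have hcont := (hf.continuousOn_fderiv_of_isOpen hU).mono hball
  obtain ⟨C, hC⟩ := (isCompact_closedBall p₀ (R + R)).exists_bound_of_continuousOn hcont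
  obtain ⟨r, hr, hrv⟩ : ∃ r : ℝ, 0 < r ∧ r * ‖v‖ ≤ R := by
    refine ⟨R / (‖v‖ + 1), by positivity, ?_⟩
    rw [div_mul_eq_mul_div, div_le_iff₀ (by positivity)]
    nlinarith
  have hmem : ∀ p ∈ ball p₀ R, ∀ z ∈ closedBall (0 : ℂ) r, p + z • v ∈ closedBall p₀ (R + R) :=
    fun p hp z hz => add_smul_mem_closedBall (ball_subset_closedBall hp) <|
      (mul_le_mul_of_nonneg_right (mem_closedBall_zero_iff.1 hz) (norm_nonneg v)).trans hrv
  have hcirc : ∀ θ : ℝ, circleMap 0 r θ ∈ closedBall (0 : ℂ) r :=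
    fun θ => circleMap_mem_closedBall 0 hr.le θ
  set k : ℝ → ℂ := fun θ => _root_.deriv (circleMap 0 r) θ * ((circleMap 0 r θ - 0) ^ 2)⁻¹ with hk
  have hkc : Continuous k := by
    simp only [hk, deriv_circleMap]
    refine ((continuous_circleMap 0 r).mul continuous_const).mul (Continuous.inv₀ ?_ ?_)
    · exact ((continuous_circleMap 0 r).sub continuous_const).pow 2
    · intro θ
      simpa using hr.ne'
  have hpath : ∀ p, Continuous fun θ : ℝ => p + circleMap 0 r θ • v := fun p =>
    continuous_const.add ((continuous_circleMap 0 r).smul continuous_const)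
  have hcauchy : ∀ p ∈ ball p₀ R, fderiv ℂ f p v =
      (2 * Real.pi * I : ℂ)⁻¹ • ∫ θ in (0 : ℝ)..2 * Real.pi, k θ • f (p + circleMap 0 r θ • v) := by
    intro p hp
    have hU' : IsOpen ((fun z : ℂ => p + z • v) ⁻¹' U) :=
      hU.preimage (by fun_prop)
    have h := two_pi_I_inv_smul_circleIntegral_sub_sq_inv_smul_of_differentiable
      (f := fun z : ℂ => f (p + z • v)) hU' (fun z hz => hball (hmem p hp z hz))
      (fun z hz => (hasDerivAt_comp_add_smul
        (hf.differentiableAt (hU.mem_nhds hz))).differentiableAt.differentiableWithinAt)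
      (mem_ball_self hr)
    have h0 := hasDerivAt_comp_add_smul (z := 0) (v := v)
      (hdiff _ (hmem p hp 0 (mem_closedBall_self hr.le)))
    rw [h0.deriv] at h
    simp only [zero_smul, add_zero] at h
    rw [← h]
    simp only [circleIntegral, smul_smul, hk]
  have hFcont : ∀ p ∈ ball p₀ R, Continuous fun θ => k θ • f (p + circleMap 0 r θ • v) :=
    fun p hp => hkc.smul <| (hf.continuousOn.mono hball).comp_continuous (hpath p)
      fun θ => hmem p hp _ (hcirc θ)
  have hF'cont : Continuous fun θ => k θ • fderiv ℂ f (p₀ + circleMap 0 r θ • v) :=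
    hkc.smul <| hcont.comp_continuous (hpath p₀)
      fun θ => hmem p₀ (mem_ball_self hR) _ (hcirc θ)
  have hderiv_integral := intervalIntegral.hasFDerivAt_integral_of_dominated_of_fderiv_le (𝕜 := ℂ)
    (μ := volume) (a := 0) (b := 2 * Real.pi) (bound := fun θ => ‖k θ‖ * C)
    (F := fun p θ => k θ • f (p + circleMap 0 r θ • v))
    (F' := fun p θ => k θ • fderiv ℂ f (p + circleMap 0 r θ • v))
    (ball_mem_nhds p₀ hR)
    (by filter_upwards [ball_mem_nhds p₀ hR] with p hp using (hFcont p hp).aestronglyMeasurable)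
    ((hFcont p₀ (mem_ball_self hR)).intervalIntegrable _ _)
    hF'cont.aestronglyMeasurable
    (ae_of_all _ fun θ _ p hp => by
      rw [norm_smul]
      exact mul_le_mul_of_nonneg_left (hC _ (hmem p hp _ (hcirc θ))) (norm_nonneg _))
    ((hkc.norm.mul continuous_const).intervalIntegrable _ _)
    (ae_of_all _ fun θ _ p hp =>
      ((hasFDerivAt_comp_add_right _).2
        (hdiff _ (hmem p hp _ (hcirc θ))).hasFDerivAt).const_smul (k θ))
  refine (hderiv_integral.differentiableAt.const_smul (2 * Real.pi * I : ℂ)⁻¹).congr_of_eventuallyEq ?_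
  filter_upwards [ball_mem_nhds p₀ hR] with p hp using hcauchy p hp

/-- A holomorphic function on an open subset of a finite-dimensional complex space is smooth. -/
theorem DifferentiableOn.contDiffOn_of_finiteDimensional [FiniteDimensional ℂ E]
    {f : E → F} {U : Set E} (hf : DifferentiableOn ℂ f U) (hU : IsOpen U) (n : ℕ) :
    ContDiffOn ℂ n f U := by
  have : ProperSpace E := FiniteDimensional.proper ℂ E
  induction n generalizing f with
  | zero => exact contDiffOn_zero.2 hf.continuousOn
  | succ n ih =>
    push_cast
    refine contDiffOn_succ_of_fderiv_apply hf (by simp) fun v => ?_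
    exact (ih (hf.fderiv_apply_of_isOpen hU v)).congr fun p hp => by
      rw [fderivWithin_of_isOpen hU hp]

end Holomorphic

section PartialDerivatives

open Set Filter Topology

variable {f g : ℂ × ℂ → ℂ} {p : ℂ × ℂ} {U : Set (ℂ × ℂ)}

lemma pdx_eq_of_hasFDerivAt {f' : ℂ × ℂ →L[ℂ] ℂ} (hf : HasFDerivAt f f' p) :
    pdx f p = f' (1, 0) := by
  have h : HasDerivAt (fun x : ℂ => (x, p.2)) (1, 0) p.1 :=
    (hasDerivAt_id p.1).prodMk (hasDerivAt_const p.1 p.2)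
  exact (hf.comp_hasDerivAt p.1 h).deriv

lemma pdy_eq_of_hasFDerivAt {f' : ℂ × ℂ →L[ℂ] ℂ} (hf : HasFDerivAt f f' p) :
    pdy f p = f' (0, 1) := by
  have h : HasDerivAt (fun y : ℂ => (p.1, y)) (0, 1) p.2 :=
    (hasDerivAt_const p.2 p.1).prodMk (hasDerivAt_id p.2)
  exact (hf.comp_hasDerivAt p.2 h).deriv

lemma pdx_congr (h : f =ᶠ[𝓝 p] g) : pdx f p = pdx g p := by
  have hc : Tendsto (fun x : ℂ => (x, p.2)) (𝓝 p.1) (𝓝 p) :=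
    (Continuous.prodMk_left p.2).tendsto p.1
  exact EventuallyEq.deriv_eq (hc.eventually h)

lemma pdy_congr (h : f =ᶠ[𝓝 p] g) : pdy f p = pdy g p := by
  have hc : Tendsto (fun y : ℂ => (p.1, y)) (𝓝 p.2) (𝓝 p) :=
    (Continuous.prodMk_right p.1).tendsto p.2
  exact EventuallyEq.deriv_eq (hc.eventually h)

lemma eqOn_pdx_fderiv (hf : DifferentiableOn ℂ f U) (hU : IsOpen U) :
    EqOn (pdx f) (fun p => fderiv ℂ f p (1, 0)) U := fun _ hp =>
  pdx_eq_of_hasFDerivAt (hf.differentiableAt (hU.mem_nhds hp)).hasFDerivAt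

lemma eqOn_pdy_fderiv (hf : DifferentiableOn ℂ f U) (hU : IsOpen U) :
    EqOn (pdy f) (fun p => fderiv ℂ f p (0, 1)) U := fun _ hp =>
  pdy_eq_of_hasFDerivAt (hf.differentiableAt (hU.mem_nhds hp)).hasFDerivAt

lemma differentiableOn_pdx (hf : DifferentiableOn ℂ f U) (hU : IsOpen U) :
    DifferentiableOn ℂ (pdx f) U :=
  (hf.fderiv_apply_of_isOpen hU (1, 0)).congr (eqOn_pdx_fderiv hf hU)

lemma differentiableOn_pdy (hf : DifferentiableOn ℂ f U) (hU : IsOpen U) :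
    DifferentiableOn ℂ (pdy f) U :=
  (hf.fderiv_apply_of_isOpen hU (0, 1)).congr (eqOn_pdy_fderiv hf hU)

lemma pdx_pdy_comm (hf : DifferentiableOn ℂ f U) (hU : IsOpen U) (hp : p ∈ U) :
    pdx (pdy f) p = pdy (pdx f) p := by
  have hc : ContDiffAt ℂ 2 f p :=
    (hf.contDiffOn_of_finiteDimensional hU 2).contDiffAt (hU.mem_nhds hp)
  have hd : HasFDerivAt (fderiv ℂ f) (fderiv ℂ (fderiv ℂ f) p) p :=
    ((hc.fderiv_right (m := 1) (by norm_num)).differentiableAt (by simp)).hasFDerivAt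
  rw [pdx_congr ((eqOn_pdy_fderiv hf hU).eventuallyEq_of_mem (hU.mem_nhds hp)),
    pdy_congr ((eqOn_pdx_fderiv hf hU).eventuallyEq_of_mem (hU.mem_nhds hp)),
    pdx_eq_of_hasFDerivAt (hd.clm_apply (hasFDerivAt_const _ _)),
    pdy_eq_of_hasFDerivAt (hd.clm_apply (hasFDerivAt_const _ _))]
  simpa using hc.isSymmSndFDerivAt (by simp) (1, 0) (0, 1)

lemma pdx_mul_add_mul {a b c d : ℂ × ℂ → ℂ} (ha : DifferentiableAt ℂ a p)
    (hb : DifferentiableAt ℂ b p) (hc : DifferentiableAt ℂ c p) (hd : DifferentiableAt ℂ d p) :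
    pdx (fun q => a q * b q + c q * d q) p =
      pdx a p * b p + a p * pdx b p + (pdx c p * d p + c p * pdx d p) := by
  have h : HasFDerivAt (fun q => a q * b q + c q * d q) _ p :=
    (ha.hasFDerivAt.mul hb.hasFDerivAt).add (hc.hasFDerivAt.mul hd.hasFDerivAt)
  rw [pdx_eq_of_hasFDerivAt h, pdx_eq_of_hasFDerivAt ha.hasFDerivAt,
    pdx_eq_of_hasFDerivAt hb.hasFDerivAt, pdx_eq_of_hasFDerivAt hc.hasFDerivAt,
    pdx_eq_of_hasFDerivAt hd.hasFDerivAt]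
  simp only [_root_.add_apply, _root_.smul_apply, smul_eq_mul]
  ring

lemma pdy_mul_add_mul {a b c d : ℂ × ℂ → ℂ} (ha : DifferentiableAt ℂ a p)
    (hb : DifferentiableAt ℂ b p) (hc : DifferentiableAt ℂ c p) (hd : DifferentiableAt ℂ d p) :
    pdy (fun q => a q * b q + c q * d q) p =
      pdy a p * b p + a p * pdy b p + (pdy c p * d p + c p * pdy d p) := by
  have h : HasFDerivAt (fun q => a q * b q + c q * d q) _ p :=
    (ha.hasFDerivAt.mul hb.hasFDerivAt).add (hc.hasFDerivAt.mul hd.hasFDerivAt)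
  rw [pdy_eq_of_hasFDerivAt h, pdy_eq_of_hasFDerivAt ha.hasFDerivAt,
    pdy_eq_of_hasFDerivAt hb.hasFDerivAt, pdy_eq_of_hasFDerivAt hc.hasFDerivAt,
    pdy_eq_of_hasFDerivAt hd.hasFDerivAt]
  simp only [_root_.add_apply, _root_.smul_apply, smul_eq_mul]
  ring

lemma clm_apply_eq_fst_add_snd (L : ℂ × ℂ →L[ℂ] ℂ) (a b : ℂ) :
    L (a, b) = L (1, 0) * a + L (0, 1) * b := by
  have h : ((a, b) : ℂ × ℂ) = a • (1, 0) + b • (0, 1) := by simp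
  rw [h, map_add, map_smul, map_smul, smul_eq_mul, smul_eq_mul]
  ring

variable {u w₁ w₂ : ℂ × ℂ → ℂ}

lemma pdx_comp (hu : DifferentiableAt ℂ u (w₁ p, w₂ p)) (h₁ : DifferentiableAt ℂ w₁ p)
    (h₂ : DifferentiableAt ℂ w₂ p) :
    pdx (fun q => u (w₁ q, w₂ q)) p =
      pdx u (w₁ p, w₂ p) * pdx w₁ p + pdy u (w₁ p, w₂ p) * pdx w₂ p := by
  have h : HasFDerivAt (fun q => u (w₁ q, w₂ q)) _ p :=
    HasFDerivAt.comp p hu.hasFDerivAt (h₁.hasFDerivAt.prodMk h₂.hasFDerivAt)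
  rw [pdx_eq_of_hasFDerivAt h, pdx_eq_of_hasFDerivAt hu.hasFDerivAt,
    pdy_eq_of_hasFDerivAt hu.hasFDerivAt, pdx_eq_of_hasFDerivAt h₁.hasFDerivAt,
    pdx_eq_of_hasFDerivAt h₂.hasFDerivAt]
  exact clm_apply_eq_fst_add_snd (fderiv ℂ u (w₁ p, w₂ p))
    (fderiv ℂ w₁ p (1, 0)) (fderiv ℂ w₂ p (1, 0))

lemma pdy_comp (hu : DifferentiableAt ℂ u (w₁ p, w₂ p)) (h₁ : DifferentiableAt ℂ w₁ p)
    (h₂ : DifferentiableAt ℂ w₂ p) :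
    pdy (fun q => u (w₁ q, w₂ q)) p =
      pdx u (w₁ p, w₂ p) * pdy w₁ p + pdy u (w₁ p, w₂ p) * pdy w₂ p := by
  have h : HasFDerivAt (fun q => u (w₁ q, w₂ q)) _ p :=
    HasFDerivAt.comp p hu.hasFDerivAt (h₁.hasFDerivAt.prodMk h₂.hasFDerivAt)
  rw [pdy_eq_of_hasFDerivAt h, pdx_eq_of_hasFDerivAt hu.hasFDerivAt,
    pdy_eq_of_hasFDerivAt hu.hasFDerivAt, pdy_eq_of_hasFDerivAt h₁.hasFDerivAt,
    pdy_eq_of_hasFDerivAt h₂.hasFDerivAt]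
  exact clm_apply_eq_fst_add_snd (fderiv ℂ u (w₁ p, w₂ p))
    (fderiv ℂ w₁ p (0, 1)) (fderiv ℂ w₂ p (0, 1))

end PartialDerivatives

section SecondOrderChainRule

open Topology

variable {Ω Ω' : Set (ℂ × ℂ)} {u w₁ w₂ : ℂ × ℂ → ℂ} {p : ℂ × ℂ}

lemma pdx_pdx_comp (hΩ : IsOpen Ω) (hΩ' : IsOpen Ω') (hw₁ : DifferentiableOn ℂ w₁ Ω)
    (hw₂ : DifferentiableOn ℂ w₂ Ω) (hmaps : ∀ p ∈ Ω, (w₁ p, w₂ p) ∈ Ω')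
    (hu : DifferentiableOn ℂ u Ω') (hp : p ∈ Ω) :
    pdx (pdx fun q => u (w₁ q, w₂ q)) p =
      pdx u (w₁ p, w₂ p) * pdx (pdx w₁) p + pdy u (w₁ p, w₂ p) * pdx (pdx w₂) p
        + pdx (pdx u) (w₁ p, w₂ p) * pdx w₁ p ^ 2
        + 2 * pdx (pdy u) (w₁ p, w₂ p) * pdx w₁ p * pdx w₂ p
        + pdy (pdy u) (w₁ p, w₂ p) * pdx w₂ p ^ 2 := by
  have at_Ω {g : ℂ × ℂ → ℂ} (hg : DifferentiableOn ℂ g Ω) {q} (hq : q ∈ Ω) :=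
    hg.differentiableAt (hΩ.mem_nhds hq)
  have at_Ω' {g : ℂ × ℂ → ℂ} (hg : DifferentiableOn ℂ g Ω') {q} (hq : q ∈ Ω) :=
    hg.differentiableAt (hΩ'.mem_nhds (hmaps q hq))
  have comp_at {g : ℂ × ℂ → ℂ} (hg : DifferentiableOn ℂ g Ω') :
      DifferentiableAt ℂ (fun q => g (w₁ q, w₂ q)) p :=
    DifferentiableAt.comp p (at_Ω' hg hp) ((at_Ω hw₁ hp).prodMk (at_Ω hw₂ hp))
  have hux := differentiableOn_pdx hu hΩ'
  have huy := differentiableOn_pdy hu hΩ'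
  have heq : pdx (fun q => u (w₁ q, w₂ q)) =ᶠ[𝓝 p] fun q =>
      pdx u (w₁ q, w₂ q) * pdx w₁ q + pdy u (w₁ q, w₂ q) * pdx w₂ q := by
    filter_upwards [hΩ.mem_nhds hp] with q hq
    exact pdx_comp (at_Ω' hu hq) (at_Ω hw₁ hq) (at_Ω hw₂ hq)
  rw [pdx_congr heq, pdx_mul_add_mul (comp_at hux) (at_Ω (differentiableOn_pdx hw₁ hΩ) hp)
    (comp_at huy) (at_Ω (differentiableOn_pdx hw₂ hΩ) hp),
    pdx_comp (at_Ω' hux hp) (at_Ω hw₁ hp) (at_Ω hw₂ hp),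
    pdx_comp (at_Ω' huy hp) (at_Ω hw₁ hp) (at_Ω hw₂ hp), ← pdx_pdy_comm hu hΩ' (hmaps p hp)]
  ring

lemma pdx_pdy_comp (hΩ : IsOpen Ω) (hΩ' : IsOpen Ω') (hw₁ : DifferentiableOn ℂ w₁ Ω)
    (hw₂ : DifferentiableOn ℂ w₂ Ω) (hmaps : ∀ p ∈ Ω, (w₁ p, w₂ p) ∈ Ω')
    (hu : DifferentiableOn ℂ u Ω') (hp : p ∈ Ω) :
    pdx (pdy fun q => u (w₁ q, w₂ q)) p =
      pdx u (w₁ p, w₂ p) * pdx (pdy w₁) p + pdy u (w₁ p, w₂ p) * pdx (pdy w₂) p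
        + pdx (pdx u) (w₁ p, w₂ p) * pdx w₁ p * pdy w₁ p
        + pdx (pdy u) (w₁ p, w₂ p) * (pdx w₁ p * pdy w₂ p + pdx w₂ p * pdy w₁ p)
        + pdy (pdy u) (w₁ p, w₂ p) * pdx w₂ p * pdy w₂ p := by
  have at_Ω {g : ℂ × ℂ → ℂ} (hg : DifferentiableOn ℂ g Ω) {q} (hq : q ∈ Ω) :=
    hg.differentiableAt (hΩ.mem_nhds hq)
  have at_Ω' {g : ℂ × ℂ → ℂ} (hg : DifferentiableOn ℂ g Ω') {q} (hq : q ∈ Ω) :=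
    hg.differentiableAt (hΩ'.mem_nhds (hmaps q hq))
  have comp_at {g : ℂ × ℂ → ℂ} (hg : DifferentiableOn ℂ g Ω') :
      DifferentiableAt ℂ (fun q => g (w₁ q, w₂ q)) p :=
    DifferentiableAt.comp p (at_Ω' hg hp) ((at_Ω hw₁ hp).prodMk (at_Ω hw₂ hp))
  have hux := differentiableOn_pdx hu hΩ'
  have huy := differentiableOn_pdy hu hΩ'
  have heq : pdy (fun q => u (w₁ q, w₂ q)) =ᶠ[𝓝 p] fun q =>
      pdx u (w₁ q, w₂ q) * pdy w₁ q + pdy u (w₁ q, w₂ q) * pdy w₂ q := by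
    filter_upwards [hΩ.mem_nhds hp] with q hq
    exact pdy_comp (at_Ω' hu hq) (at_Ω hw₁ hq) (at_Ω hw₂ hq)
  rw [pdx_congr heq, pdx_mul_add_mul (comp_at hux) (at_Ω (differentiableOn_pdy hw₁ hΩ) hp)
    (comp_at huy) (at_Ω (differentiableOn_pdy hw₂ hΩ) hp),
    pdx_comp (at_Ω' hux hp) (at_Ω hw₁ hp) (at_Ω hw₂ hp),
    pdx_comp (at_Ω' huy hp) (at_Ω hw₁ hp) (at_Ω hw₂ hp), ← pdx_pdy_comm hu hΩ' (hmaps p hp)]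
  ring

lemma pdy_pdy_comp (hΩ : IsOpen Ω) (hΩ' : IsOpen Ω') (hw₁ : DifferentiableOn ℂ w₁ Ω)
    (hw₂ : DifferentiableOn ℂ w₂ Ω) (hmaps : ∀ p ∈ Ω, (w₁ p, w₂ p) ∈ Ω')
    (hu : DifferentiableOn ℂ u Ω') (hp : p ∈ Ω) :
    pdy (pdy fun q => u (w₁ q, w₂ q)) p =
      pdx u (w₁ p, w₂ p) * pdy (pdy w₁) p + pdy u (w₁ p, w₂ p) * pdy (pdy w₂) p
        + pdx (pdx u) (w₁ p, w₂ p) * pdy w₁ p ^ 2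
        + 2 * pdx (pdy u) (w₁ p, w₂ p) * pdy w₁ p * pdy w₂ p
        + pdy (pdy u) (w₁ p, w₂ p) * pdy w₂ p ^ 2 := by
  have at_Ω {g : ℂ × ℂ → ℂ} (hg : DifferentiableOn ℂ g Ω) {q} (hq : q ∈ Ω) :=
    hg.differentiableAt (hΩ.mem_nhds hq)
  have at_Ω' {g : ℂ × ℂ → ℂ} (hg : DifferentiableOn ℂ g Ω') {q} (hq : q ∈ Ω) :=
    hg.differentiableAt (hΩ'.mem_nhds (hmaps q hq))
  have comp_at {g : ℂ × ℂ → ℂ} (hg : DifferentiableOn ℂ g Ω') :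
      DifferentiableAt ℂ (fun q => g (w₁ q, w₂ q)) p :=
    DifferentiableAt.comp p (at_Ω' hg hp) ((at_Ω hw₁ hp).prodMk (at_Ω hw₂ hp))
  have hux := differentiableOn_pdx hu hΩ'
  have huy := differentiableOn_pdy hu hΩ'
  have heq : pdy (fun q => u (w₁ q, w₂ q)) =ᶠ[𝓝 p] fun q =>
      pdx u (w₁ q, w₂ q) * pdy w₁ q + pdy u (w₁ q, w₂ q) * pdy w₂ q := by
    filter_upwards [hΩ.mem_nhds hp] with q hq
    exact pdy_comp (at_Ω' hu hq) (at_Ω hw₁ hq) (at_Ω hw₂ hq)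
  rw [pdy_congr heq, pdy_mul_add_mul (comp_at hux) (at_Ω (differentiableOn_pdy hw₁ hΩ) hp)
    (comp_at huy) (at_Ω (differentiableOn_pdy hw₂ hΩ) hp),
    pdy_comp (at_Ω' hux hp) (at_Ω hw₁ hp) (at_Ω hw₂ hp),
    pdy_comp (at_Ω' huy hp) (at_Ω hw₁ hp) (at_Ω hw₂ hp), ← pdx_pdy_comm hu hΩ' (hmaps p hp)]
  ring

lemma Jac_comp {u₁ u₂ : ℂ × ℂ → ℂ} (hu₁ : DifferentiableAt ℂ u₁ (w₁ p, w₂ p))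
    (hu₂ : DifferentiableAt ℂ u₂ (w₁ p, w₂ p)) (h₁ : DifferentiableAt ℂ w₁ p)
    (h₂ : DifferentiableAt ℂ w₂ p) :
    Jac (fun q => u₁ (w₁ q, w₂ q)) (fun q => u₂ (w₁ q, w₂ q)) p =
      Jac u₁ u₂ (w₁ p, w₂ p) * Jac w₁ w₂ p := by
  simp only [Jac, pdx_comp hu₁ h₁ h₂, pdx_comp hu₂ h₁ h₂, pdy_comp hu₁ h₁ h₂,
    pdy_comp hu₂ h₁ h₂]
  ring

end SecondOrderChainRule

/-- **Main Proposition 1.** Change of independent variables law for the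
four GL(3) derivatives. -/
theorem statement2 (Ω Ω' : Set (ℂ × ℂ)) (hΩ : IsOpen Ω) (hΩ' : IsOpen Ω')
    (w₁ w₂ : ℂ × ℂ → ℂ)
    (hw₁ : DifferentiableOn ℂ w₁ Ω) (hw₂ : DifferentiableOn ℂ w₂ Ω)
    (hmaps : ∀ p ∈ Ω, (w₁ p, w₂ p) ∈ Ω')
    (hD : ∀ p ∈ Ω, Jac w₁ w₂ p ≠ 0)
    (u₁ u₂ : ℂ × ℂ → ℂ)
    (hu₁ : DifferentiableOn ℂ u₁ Ω') (hu₂ : DifferentiableOn ℂ u₂ Ω')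
    (hJu : ∀ q ∈ Ω', Jac u₁ u₂ q ≠ 0) :
    ∀ p ∈ Ω,
      Vvec (fun q => u₁ (w₁ q, w₂ q)) (fun q => u₂ (w₁ q, w₂ q)) p =
        (Jac w₁ w₂ p)⁻¹ • (Mmat w₁ w₂ p *ᵥ Vvec u₁ u₂ (w₁ p, w₂ p))
          + Vvec w₁ w₂ p := by
  intro p hp
  have h₁ := hw₁.differentiableAt (hΩ.mem_nhds hp)
  have h₂ := hw₂.differentiableAt (hΩ.mem_nhds hp)
  have hv₁ := hu₁.differentiableAt (hΩ'.mem_nhds (hmaps p hp))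
  have hv₂ := hu₂.differentiableAt (hΩ'.mem_nhds (hmaps p hp))
  have hDp := hD p hp
  have hJp := hJu _ (hmaps p hp)
  have hJJ : Jac u₁ u₂ (w₁ p, w₂ p) = pdx u₁ (w₁ p, w₂ p) * pdy u₂ (w₁ p, w₂ p)
    - pdx u₂ (w₁ p, w₂ p) * pdy u₁ (w₁ p, w₂ p) := rfl
  ext i
  fin_cases i <;>
  · simp [Vvec, Mmat, brX, brY, sqX, sqY, Jac_comp hv₁ hv₂ h₁ h₂, pdx_comp hv₁ h₁ h₂,
      pdx_comp hv₂ h₁ h₂, pdy_comp hv₁ h₁ h₂, pdy_comp hv₂ h₁ h₂,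
      pdx_pdx_comp hΩ hΩ' hw₁ hw₂ hmaps hu₁ hp, pdx_pdx_comp hΩ hΩ' hw₁ hw₂ hmaps hu₂ hp,
      pdx_pdy_comp hΩ hΩ' hw₁ hw₂ hmaps hu₁ hp, pdx_pdy_comp hΩ hΩ' hw₁ hw₂ hmaps hu₂ hp,
      pdy_pdy_comp hΩ hΩ' hw₁ hw₂ hmaps hu₁ hp, pdy_pdy_comp hΩ hΩ' hw₁ hw₂ hmaps hu₂ hp]
    field_simp
    rw [hJJ]
    ring
end
end
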